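/- Let G₂(q) = −1/24 + Σ_{n≥1} σ₁(n) q^n, ϑ(q) = Σ_{n∈ℤ} q^{n²}, and α(q) = Σ_{odd n > 0} σ₁(n) q^n. Then ϑ(q)⁴ = 1 + 8Σ_{n≥1} (Σ_{d|n, 4∤d} d) q^n (Jacobi's four-square theorem), and consequently ϑ(q)⁴ + 4α(q) + 24G₂(q⁴) has constant term 0 and its coefficient of q¹ equals 8 + 4·1 = 12. -/

import Mathlib

/-- `r₄(n)`: the number of representations of `n` as a sum of four squares. -/
noncomputable def r4 (n : ℕ) : ℕ :=
  Nat.card {v : Fin 4 → ℤ // ∑ i, (v i) ^ 2 = (n : ℤ)}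

/-- The `q^n`-coefficient of `ϑ(q)⁴ + 4α(q) + 24G₂(q⁴)`, where
`ϑ(q) = Σ_{m∈ℤ} q^{m²}`, `α(q) = Σ_{odd m>0} σ₁(m) q^m`, and
`G₂(q) = −1/24 + Σ_{m≥1} σ₁(m) q^m`. -/
noncomputable def comboCoeff (n : ℕ) : ℚ :=
  (r4 n : ℚ) + 4 * (if Odd n then ((∑ d ∈ n.divisors, d : ℕ) : ℚ) else 0) +
    24 * (if n = 0 then -1 / 24
      else if 4 ∣ n then ((∑ d ∈ (n / 4).divisors, d : ℕ) : ℚ) else 0)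

/-!
Let `N ≡ 5 mod 8`. Summing `N - 5 x²` over the first coordinates `x` of the representations of `N`
by five odd squares gives `0`, since all coordinates have the same mean square `N / 5`. Liouville's
method, that is, two involutions on the indefinite forms of discriminant `N`, shows that the divisor
sums `σ₁((N - x²) / 4)` satisfy the same linear relation. With `N = 4 m + 1` for `m` odd, the
relation determines its solution recursively from the value at `m = 1`, so `4 m` has exactly
`16 σ₁(m)` representations by four odd squares. Parity arguments then give
`r₄(4m) = r₄(2m) = 3 r₄(m)` and `r₄(4m) = r₄(m) + 16 σ₁(m)`, hence `r₄(m) = 8 σ₁(m)` and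
`r₄(2ʲm) = 24 σ₁(m)` for `j ≥ 1`.
-/

namespace FourSquares

open Finset
open scoped ArithmeticFunction.sigma

/-- The integral binary quadratic forms `a X² + x X Y - b Y²` with `a, b > 0` and discriminant
`x² + 4ab = N`, encoded as triples `(x, a, b)`. The bounds on the coordinates only serve to make
the set a `Finset`; see `mem_simpleForms`. -/
noncomputable def simpleForms (N : ℤ) : Finset (ℤ × ℤ × ℤ) :=
  {p ∈ Icc (-N) N ×ˢ Icc 1 N ×ˢ Icc 1 N | p.1 ^ 2 + 4 * (p.2.1 * p.2.2) = N}

lemma neg_le_and_le_of_sq_le {x N : ℤ} (h : x ^ 2 ≤ N) : -N ≤ x ∧ x ≤ N :=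
  abs_le.1 ((sq_abs x ▸ Int.le_self_sq |x|).trans h)

lemma mem_simpleForms {N x a b : ℤ} :
    (x, a, b) ∈ simpleForms N ↔ 0 < a ∧ 0 < b ∧ x ^ 2 + 4 * (a * b) = N := by
  simp only [simpleForms, mem_filter, mem_product, mem_Icc]
  constructor
  · rintro ⟨⟨-, ⟨ha, -⟩, hb, -⟩, h⟩
    exact ⟨by lia, by lia, h⟩
  · rintro ⟨ha, hb, h⟩
    have hab : 0 < a * b := mul_pos ha hb
    have hx : x ^ 2 ≤ N := by lia
    refine ⟨⟨neg_le_and_le_of_sq_le hx, ⟨by lia, ?_⟩, by lia, ?_⟩, h⟩ <;>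
      nlinarith [sq_nonneg x]

/-- In terms of `f(t) = a t² + x t - b`, the two symmetries are `f(t) ↦ f(-1 - t)` and
`f(t) ↦ -t² f(1 / t)`. The first preserves the forms with `f(-1) < 0`, the second exchanges them
with those with `f(-1) > 0`, and `f(-1) = 0` would make the discriminant `N` a square. -/
lemma sum_simpleForms_eq_zero {N : ℤ} (hN : ¬IsSquare N) {h : ℤ → ℤ → ℤ → ℤ}
    (h_reflect : ∀ x a b, h (2 * a - x) a (b + x - a) = -h x a b)
    (h_swap : ∀ x a b, h (-x) b a = h x a b) :
    ∑ p ∈ simpleForms N, h p.1 p.2.1 p.2.2 = 0 := by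
  have sum_pos : ∑ p ∈ simpleForms N with 0 < p.2.2 + p.1 - p.2.1, h p.1 p.2.1 p.2.2 = 0 := by
    refine sum_involution (fun p _ ↦ (2 * p.2.1 - p.1, p.2.1, p.2.2 + p.1 - p.2.1))
      ?_ ?_ ?_ ?_
    · rintro ⟨x, a, b⟩ -
      simp [h_reflect]
    · rintro ⟨x, a, b⟩ - hne heq
      have := h_reflect x a b
      grind
    · rintro ⟨x, a, b⟩ hp
      simp only [mem_filter, mem_simpleForms] at hp ⊢
      grind
    · rintro ⟨x, a, b⟩ -
      grind
  have sum_neg : ∑ p ∈ simpleForms N with ¬0 < p.2.2 + p.1 - p.2.1, h p.1 p.2.1 p.2.2 =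
      ∑ p ∈ simpleForms N with 0 < p.2.2 + p.1 - p.2.1, h p.1 p.2.1 p.2.2 := by
    refine sum_nbij' (fun p ↦ (-p.1, p.2.2, p.2.1)) (fun p ↦ (-p.1, p.2.2, p.2.1))
      ?_ ?_ ?_ ?_ ?_
    · rintro ⟨x, a, b⟩ hp
      simp only [mem_filter, mem_simpleForms] at hp ⊢
      have ne_zero : b + x - a ≠ 0 := by
        rintro h0
        exact hN ⟨a + b, by grind⟩
      grind
    · rintro ⟨x, a, b⟩ hp
      simp only [mem_filter, mem_simpleForms] at hp ⊢
      grind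
    · simp
    · simp
    · simp [h_swap]
  rw [← sum_filter_add_sum_filter_not _ (fun p ↦ 0 < p.2.2 + p.1 - p.2.1), sum_neg, sum_pos,
    add_zero]

lemma sum_simpleForms_sub_five_mul_sq_mul_eq_zero {N : ℤ} (hN : ¬IsSquare N) :
    ∑ p ∈ simpleForms N, (N - 5 * p.1 ^ 2) * p.2.1 = 0 := by
  let h (x a b : ℤ) : ℤ := (a + b) * (a - x) * (b + x)
  have sum_h : ∑ p ∈ simpleForms N, h p.1 p.2.1 p.2.2 = 0 :=
    sum_simpleForms_eq_zero hN (fun _ _ _ ↦ by ring) (fun _ _ _ ↦ by ring)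
  have sum_h_neg : ∑ p ∈ simpleForms N, h (-p.1) p.2.1 p.2.2 = 0 := by
    rw [← sum_h]
    refine sum_nbij' (fun p ↦ (-p.1, p.2)) (fun p ↦ (-p.1, p.2)) ?_ ?_ ?_ ?_ ?_ <;>
      simp [mem_simpleForms]
  have sum_swap : ∑ p ∈ simpleForms N, (N - 5 * p.1 ^ 2) * p.2.2 =
      ∑ p ∈ simpleForms N, (N - 5 * p.1 ^ 2) * p.2.1 := by
    refine sum_nbij' (fun p ↦ (p.1, p.2.2, p.2.1)) (fun p ↦ (p.1, p.2.2, p.2.1)) ?_ ?_ ?_ ?_ ?_ <;>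
      simp +contextual [mem_simpleForms, mul_comm]
  have sum_add : ∑ p ∈ simpleForms N, ((N - 5 * p.1 ^ 2) * p.2.1 + (N - 5 * p.1 ^ 2) * p.2.2) =
      ∑ p ∈ simpleForms N, 2 * (h p.1 p.2.1 p.2.2 + h (-p.1) p.2.1 p.2.2) := by
    refine sum_congr rfl ?_
    rintro ⟨x, a, b⟩ hp
    obtain ⟨-, -, rfl⟩ := mem_simpleForms.1 hp
    ring
  rw [sum_add_distrib, sum_swap, ← mul_sum, sum_add_distrib, sum_h, sum_h_neg] at sum_add
  lia

lemma sum_simpleForms_filter_fst {N x : ℤ} (hx : 4 ∣ N - x ^ 2) :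
    ∑ p ∈ simpleForms N with p.1 = x, p.2.1 = σ 1 ((N - x ^ 2) / 4).toNat := by
  rw [ArithmeticFunction.sigma_one_apply, Nat.cast_sum,
    ← Nat.sum_divisorsAntidiagonal (f := fun d _ ↦ (d : ℤ))]
  obtain ⟨k, hk⟩ := hx
  obtain rfl : N = x ^ 2 + 4 * k := by lia
  simp only [add_sub_cancel_left]
  refine sum_nbij' (fun p ↦ (p.2.1.toNat, p.2.2.toNat)) (fun d ↦ (x, d.1, d.2)) ?_ ?_ ?_ ?_ ?_
  · rintro ⟨y, a, b⟩ hp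
    simp only [mem_filter, mem_simpleForms] at hp
    obtain ⟨⟨ha, hb, h⟩, rfl⟩ := hp
    obtain rfl : a * b = k := by lia
    have hab : 0 < a * b := mul_pos ha hb
    lift a to ℕ using ha.le
    lift b to ℕ using hb.le
    rw [Nat.mem_divisorsAntidiagonal, Int.mul_ediv_cancel_left _ four_ne_zero]
    exact ⟨by norm_cast, by lia⟩
  · rintro ⟨d, e⟩ hd
    obtain ⟨hd0, he0⟩ := Nat.ne_zero_of_mem_divisorsAntidiagonal hd
    have hde : ((d * e : ℕ) : ℤ) = k := by
      have := Nat.mem_divisorsAntidiagonal.1 hd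
      lia
    rw [mem_filter, mem_simpleForms]
    exact ⟨⟨by lia, by lia, by rw [← hde]; push_cast; ring⟩, rfl⟩
  · rintro ⟨y, a, b⟩ hp
    simp only [mem_filter, mem_simpleForms] at hp
    grind
  · simp
  · rintro ⟨y, a, b⟩ hp
    simp only [mem_filter, mem_simpleForms] at hp
    grind

lemma sum_sub_five_mul_sq_mul_sigma_one_eq_zero {N : ℤ} (hN : ¬IsSquare N) :
    ∑ x ∈ Icc (-N) N with 4 ∣ N - x ^ 2,
      (N - 5 * x ^ 2) * (σ 1 ((N - x ^ 2) / 4).toNat : ℤ) = 0 := by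
  rw [← sum_simpleForms_sub_five_mul_sq_mul_eq_zero hN, ← sum_fiberwise_of_maps_to (g := Prod.fst)]
  · refine sum_congr rfl fun x hx ↦ ?_
    rw [← sum_simpleForms_filter_fst (mem_filter.1 hx).2, mul_sum]
    refine sum_congr rfl fun p hp ↦ ?_
    rw [(mem_filter.1 hp).2]
  · rintro ⟨x, a, b⟩ hp
    obtain ⟨ha, hb, h⟩ := mem_simpleForms.1 hp
    have hab : 0 < a * b := mul_pos ha hb
    rw [mem_filter, mem_Icc]
    exact ⟨neg_le_and_le_of_sq_le (by lia), a * b, by lia⟩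

/-- The representations of `N` as an ordered sum of `k` squares of integers. The bounds on the
coordinates only serve to make the set a `Finset`; see `mem_sqReps`. -/
noncomputable def sqReps (k : ℕ) (N : ℤ) : Finset (Fin k → ℤ) :=
  {v ∈ Fintype.piFinset fun _ ↦ Icc (-N) N | ∑ i, v i ^ 2 = N}

variable {k : ℕ} {N : ℤ} {v : Fin k → ℤ}

lemma neg_le_and_le_of_sum_sq_eq (h : ∑ i, v i ^ 2 = N) (i : Fin k) : -N ≤ v i ∧ v i ≤ N :=
  neg_le_and_le_of_sq_le <| h ▸ single_le_sum (fun j _ ↦ sq_nonneg (v j)) (mem_univ i)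

lemma mem_sqReps : v ∈ sqReps k N ↔ ∑ i, v i ^ 2 = N := by
  simpa [sqReps] using neg_le_and_le_of_sum_sq_eq

lemma comp_perm_mem_sqReps (e : Equiv.Perm (Fin k)) : v ∘ e ∈ sqReps k N ↔ v ∈ sqReps k N := by
  simp [mem_sqReps, Equiv.sum_comp e (fun i ↦ v i ^ 2)]

lemma cons_mem_sqReps {x : ℤ} :
    (Fin.cons x v : Fin (k + 1) → ℤ) ∈ sqReps (k + 1) N ↔ v ∈ sqReps k (N - x ^ 2) := by
  simp [mem_sqReps, Fin.sum_univ_succ, eq_sub_iff_add_eq']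

section CoordinatePredicate

variable (k N) (p : ℤ → Prop) [DecidablePred p]

lemma sum_sqReps_sq_apply_eq (i j : Fin k) :
    ∑ v ∈ sqReps k N with ∀ l, p (v l), v i ^ 2 = ∑ v ∈ sqReps k N with ∀ l, p (v l), v j ^ 2 := by
  refine sum_equiv ((Equiv.swap i j).arrowCongr (Equiv.refl ℤ)) (fun v ↦ ?_) (fun v _ ↦ ?_)
  · have h := (Equiv.swap i j).surjective.forall (p := fun l ↦ p (v l))
    simp [Equiv.arrowCongr, comp_perm_mem_sqReps, h]
  · simp [Equiv.arrowCongr]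

lemma sum_sqReps_sub_succ_mul_sq_eq_zero :
    ∑ v ∈ sqReps (k + 1) N with ∀ l, p (v l), (N - (k + 1) * v 0 ^ 2) = 0 := by
  have sum_eq_sum_sq : ∑ v ∈ sqReps (k + 1) N with ∀ l, p (v l), N =
      ∑ v ∈ sqReps (k + 1) N with ∀ l, p (v l), ∑ i, v i ^ 2 :=
    sum_congr rfl fun v hv ↦ (mem_sqReps.1 (mem_filter.1 hv).1).symm
  rw [sum_sub_distrib, sum_eq_sum_sq, sum_comm,
    sum_congr rfl fun i _ ↦ sum_sqReps_sq_apply_eq (k + 1) N p i 0, ← mul_sum]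
  simp

lemma card_sqReps_succ_filter_zero {x : ℤ} (hx : p x) :
    #{v ∈ sqReps (k + 1) N | (∀ l, p (v l)) ∧ v 0 = x} =
      #{v ∈ sqReps k (N - x ^ 2) | ∀ l, p (v l)} := by
  refine (card_nbij' (Fin.cons x) Fin.tail ?_ ?_ ?_ ?_).symm
  · intro v hv
    simpa [cons_mem_sqReps, Fin.forall_fin_succ, hx] using hv
  · intro v hv
    induction v using Fin.consCases with
    | _ y v =>
    simp only [coe_filter, Set.mem_ofPred_eq, Fin.cons_zero, cons_mem_sqReps,
      Fin.forall_fin_succ, Fin.cons_succ, Fin.tail_cons] at hv ⊢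
    grind
  · intro v _
    exact Fin.tail_cons (α := fun _ ↦ ℤ) x v
  · intro v hv
    rw [← (mem_filter.1 hv).2.2, Fin.cons_self_tail]

/-- By symmetry each coordinate carries the same share of `∑ v, ∑ i, v i ^ 2 = ∑ v, N`. -/
lemma sum_sub_succ_mul_sq_mul_card_sqReps_eq_zero :
    ∑ x ∈ Icc (-N) N with p x,
      (N - (k + 1) * x ^ 2) * (#{v ∈ sqReps k (N - x ^ 2) | ∀ l, p (v l)} : ℤ) = 0 := by
  rw [← sum_sqReps_sub_succ_mul_sq_eq_zero k N p,
    ← sum_fiberwise_of_maps_to (g := fun v : Fin (k + 1) → ℤ ↦ v 0) (t := {x ∈ Icc (-N) N | p x})]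
  · refine sum_congr rfl fun x hx ↦ ?_
    rw [← card_sqReps_succ_filter_zero k N p (mem_filter.1 hx).2, filter_filter, mul_comm,
      ← nsmul_eq_mul, ← sum_const]
    refine sum_congr rfl fun v hv ↦ ?_
    rw [(mem_filter.1 hv).2.2]
  · intro v hv
    obtain ⟨hv, hpv⟩ := mem_filter.1 hv
    rw [mem_filter, mem_Icc]
    exact ⟨neg_le_and_le_of_sum_sq_eq (mem_sqReps.1 hv) 0, hpv 0⟩

end CoordinatePredicate

lemma one_le_sq_of_odd {x : ℤ} (hx : Odd x) : 1 ≤ x ^ 2 := by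
  have := Int.sq_mod_four_eq_one_of_odd hx
  have := sq_nonneg x
  lia

lemma card_odd_sqReps_of_lt (hN : N < k) : #{v ∈ sqReps k N | ∀ i, Odd (v i)} = 0 := by
  rw [card_eq_zero, filter_eq_empty_iff]
  intro v hv hodd
  have le_sum : ∑ _i : Fin k, 1 ≤ ∑ i, v i ^ 2 := sum_le_sum fun i _ ↦ one_le_sq_of_odd (hodd i)
  rw [mem_sqReps.1 hv] at le_sum
  simp only [sum_const, card_univ, Fintype.card_fin, nsmul_eq_mul, mul_one] at le_sum
  lia

lemma card_odd_sqReps_self (k : ℕ) : #{v ∈ sqReps k k | ∀ i, Odd (v i)} = 2 ^ k := by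
  have eq_piFinset : {v ∈ sqReps k k | ∀ i, Odd (v i)} = Fintype.piFinset fun _ ↦ {1, -1} := by
    ext v
    simp only [mem_filter, mem_sqReps, Fintype.mem_piFinset, mem_insert, mem_singleton,
      ← sq_eq_one_iff]
    constructor
    · rintro ⟨hsum, hodd⟩ i
      have sum_eq : ∑ _i : Fin k, 1 = ∑ i, v i ^ 2 := by simp [hsum]
      exact ((sum_eq_sum_iff_of_le fun i _ ↦ one_le_sq_of_odd (hodd i)).1 sum_eq i
        (mem_univ i)).symm
    · intro h
      exact ⟨by simp [h], fun i ↦ (Int.odd_pow' two_ne_zero).1 (h i ▸ odd_one)⟩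
  simp [eq_piFinset]

lemma eq_zero_of_odd_sq_recurrence {g : ℤ → ℤ} (g_nonpos : ∀ N ≤ 0, g N = 0) (g_four : g 4 = 0)
    (hg : ∀ N, N % 8 = 5 → ∑ x ∈ Icc (-N) N with Odd x, (N - 5 * x ^ 2) * g (N - x ^ 2) = 0)
    {M : ℤ} (hM : M % 8 = 4) : g M = 0 := by
  induction hn : M.toNat using Nat.strong_induction_on generalizing M with
  | _ n ih =>
  subst hn
  rcases le_or_gt M 4 with hM4 | hM4
  · rcases hM4.lt_or_eq with hlt | rfl
    · exact g_nonpos M (by lia)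
    · exact g_four
  have units_subset : {1, -1} ⊆ {x ∈ Icc (-(M + 1)) (M + 1) | Odd x} := by
    simp only [insert_subset_iff, singleton_subset_iff, mem_filter, mem_Icc]
    exact ⟨⟨by lia, odd_one⟩, by lia, by decide⟩
  have terms_eq_zero : ∀ x ∈ {x ∈ Icc (-(M + 1)) (M + 1) | Odd x}, x ∉ ({1, -1} : Finset ℤ) →
      (M + 1 - 5 * x ^ 2) * g (M + 1 - x ^ 2) = 0 := by
    intro x hx hx1
    obtain ⟨-, hodd⟩ := mem_filter.1 hx
    have sq_emod := Int.eight_dvd_sq_sub_one_of_odd hodd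
    have one_lt_sq : 1 < x ^ 2 :=
      lt_of_le_of_ne (one_le_sq_of_odd hodd) fun h ↦ hx1 (by simpa using h.symm)
    rcases le_or_gt (M + 1 - x ^ 2) 0 with hle | hgt
    · rw [g_nonpos _ hle, mul_zero]
    · rw [ih _ (by lia) (by lia) rfl, mul_zero]
  have leading : ∑ x ∈ {1, -1}, (M + 1 - 5 * x ^ 2) * g (M + 1 - x ^ 2) = 0 := by
    rw [sum_subset units_subset terms_eq_zero, hg _ (by lia)]
  have sub_four_mul_eq_zero : (M - 4) * g M = 0 := by
    rw [sum_pair (by decide), neg_one_sq, one_pow, add_sub_cancel_right] at leading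
    linarith
  exact (mul_eq_zero.1 sub_four_mul_eq_zero).resolve_left (by lia)

lemma not_isSquare_of_emod_eight_eq_five {N : ℤ} (hN : N % 8 = 5) : ¬IsSquare N := by
  rintro ⟨x, rfl⟩
  have hx : Odd x := (Int.odd_mul.1 (show Odd (x * x) from Int.odd_iff.2 (by lia))).1
  have := Int.eight_dvd_sq_sub_one_of_odd hx
  grind

lemma sq_emod_four (x : ℤ) : x ^ 2 % 4 = x % 2 := by
  rcases Int.even_or_odd' x with ⟨y, rfl | rfl⟩ <;> ring_nf <;> lia

lemma four_dvd_sub_sq_iff_odd {N x : ℤ} (hN : N % 4 = 1) : 4 ∣ N - x ^ 2 ↔ Odd x := by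
  have := sq_emod_four x
  rw [Int.odd_iff]
  lia

lemma card_odd_sqReps_four {N : ℤ} (hN : N % 8 = 4) :
    #{v ∈ sqReps 4 N | ∀ i, Odd (v i)} = 16 * σ 1 (N / 4).toNat := by
  let g (M : ℤ) : ℤ := #{v ∈ sqReps 4 M | ∀ i, Odd (v i)} - 16 * (σ 1 (M / 4).toNat : ℤ)
  suffices g N = 0 by lia
  refine eq_zero_of_odd_sq_recurrence (fun M hM ↦ ?_) ?_ (fun M hM ↦ ?_) hN
  · have h4 : M / 4 ≤ 0 := by lia
    simp [g, card_odd_sqReps_of_lt (k := 4) (N := M) (by lia), Int.toNat_of_nonpos h4]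
  · have card_four := card_odd_sqReps_self 4
    rw [Nat.cast_ofNat] at card_four
    norm_num [g, card_four]
  · have card_sum := sum_sub_succ_mul_sq_mul_card_sqReps_eq_zero 4 M Odd
    have sigma_sum := sum_sub_five_mul_sq_mul_sigma_one_eq_zero <|
      not_isSquare_of_emod_eight_eq_five hM
    simp only [four_dvd_sub_sq_iff_odd (N := M) (by lia)] at sigma_sum
    rw [Nat.cast_ofNat, show (4 + 1 : ℤ) = 5 by norm_num] at card_sum
    simp only [g, mul_sub, sum_sub_distrib, card_sum, mul_left_comm _ (16 : ℤ), ← mul_sum,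
      sigma_sum]
    simp

lemma modEq_sum_emod_two_of_mem_sqReps (hv : v ∈ sqReps k N) : N ≡ ∑ i, v i % 2 [ZMOD 4] := by
  rw [← mem_sqReps.1 hv]
  refine Int.ModEq.sum fun i _ ↦ ?_
  have := sq_emod_four (v i)
  rw [Int.ModEq]
  lia

lemma emod_four_of_mem_sqReps_four {v : Fin 4 → ℤ} (hv : v ∈ sqReps 4 N) :
    N % 4 = (v 0 % 2 + v 1 % 2 + v 2 % 2 + v 3 % 2) % 4 := by
  rw [modEq_sum_emod_two_of_mem_sqReps hv, Fin.sum_univ_four]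

lemma card_even_sqReps_four_mul (k : ℕ) (N : ℤ) :
    #{v ∈ sqReps k (4 * N) | ∀ i, Even (v i)} = #(sqReps k N) := by
  have sum_two_mul (v : Fin k → ℤ) : ∑ i, (2 * v i) ^ 2 = 4 * ∑ i, v i ^ 2 := by
    rw [mul_sum]
    exact sum_congr rfl fun i _ ↦ by ring
  refine (card_nbij (fun v i ↦ 2 * v i) ?_ ?_ ?_).symm
  · intro v hv
    rw [mem_coe, mem_sqReps] at hv
    simp [mem_sqReps, sum_two_mul, hv]
  · intro v _ w _ h
    funext i
    simpa using congr_fun h i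
  · intro v hv
    obtain ⟨hsum, heven⟩ := mem_filter.1 hv
    choose w hw using fun i ↦ (heven i).two_dvd
    obtain rfl : v = fun i ↦ 2 * w i := funext hw
    rw [mem_sqReps, sum_two_mul] at hsum
    exact ⟨w, by rw [mem_coe, mem_sqReps]; lia, rfl⟩

lemma mem_sqReps_four {v : Fin 4 → ℤ} :
    v ∈ sqReps 4 N ↔ v 0 ^ 2 + v 1 ^ 2 + v 2 ^ 2 + v 3 ^ 2 = N := by
  rw [mem_sqReps, Fin.sum_univ_four]

lemma card_sqReps_four_four_mul (N : ℤ) :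
    #(sqReps 4 (4 * N)) = #(sqReps 4 N) + #{v ∈ sqReps 4 (4 * N) | ∀ i, Odd (v i)} := by
  rw [← card_even_sqReps_four_mul 4 N,
    ← card_filter_add_card_filter_not (s := sqReps 4 (4 * N)) (fun v ↦ ∀ i, Even (v i))]
  congr 2
  refine filter_congr fun v hv ↦ ?_
  have parity := emod_four_of_mem_sqReps_four hv
  simp only [Int.even_iff, Int.odd_iff, Fin.forall_fin_succ, Fin.succ_zero_eq_one,
    Fin.succ_one_eq_two, Fin.reduceSucc, IsEmpty.forall_iff, and_true]
  lia

/-- The bijection is multiplication by `1 + i` on both factors of `ℤ[i]² = ℤ⁴`, up to signs. -/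
lemma card_sqReps_four_two_mul_filter_even (N : ℤ) :
    #{v ∈ sqReps 4 (2 * N) | Even (v 0 + v 1)} = #(sqReps 4 N) := by
  refine (card_nbij (fun v ↦ ![v 0 + v 1, v 0 - v 1, v 2 + v 3, v 2 - v 3]) ?_ ?_ ?_).symm
  · intro v hv
    simp only [mem_coe, mem_filter, mem_sqReps_four, Matrix.cons_val] at hv ⊢
    exact ⟨by rw [← hv]; ring, v 0, by ring⟩
  · intro v _ w _ h
    simp only [Matrix.vecCons_inj] at h
    funext i
    fin_cases i <;> simp <;> lia
  · intro v hv
    obtain ⟨hv, a, ha⟩ := mem_filter.1 hv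
    obtain ⟨b, hb⟩ : Even (v 2 + v 3) := by
      have parity := emod_four_of_mem_sqReps_four hv
      rw [Int.even_iff]
      lia
    rw [mem_sqReps_four] at hv
    refine ⟨![a, a - v 1, b, b - v 3], ?_, ?_⟩
    · simp only [mem_coe, mem_sqReps_four, Matrix.cons_val]
      grind
    · funext i
      fin_cases i <;> simp <;> lia

lemma card_sqReps_four_two_mul_of_even (hN : Even N) : #(sqReps 4 (2 * N)) = #(sqReps 4 N) := by
  rw [← card_sqReps_four_two_mul_filter_even N, filter_true_of_mem]
  intro v hv
  have parity := emod_four_of_mem_sqReps_four hv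
  rw [Int.even_iff] at hN ⊢
  lia

lemma card_sqReps_filter_comp_perm (e : Equiv.Perm (Fin k)) (p : (Fin k → ℤ) → Prop)
    [DecidablePred p] : #{v ∈ sqReps k N | p (v ∘ e)} = #{v ∈ sqReps k N | p v} := by
  refine card_equiv (e.symm.arrowCongr (Equiv.refl ℤ)) fun v ↦ ?_
  simp [Equiv.arrowCongr, comp_perm_mem_sqReps]

lemma card_sqReps_four_two_mul_of_odd (hN : Odd N) : #(sqReps 4 (2 * N)) = 3 * #(sqReps 4 N) := by
  have card_class (j : Fin 3) :
      #{v ∈ sqReps 4 (2 * N) | Even (v 0 + v j.succ)} = #(sqReps 4 N) := by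
    have swap_zero : Equiv.swap 1 j.succ 0 = 0 :=
      Equiv.swap_apply_of_ne_of_ne (by decide) (Fin.succ_ne_zero j).symm
    rw [← card_sqReps_four_two_mul_filter_even,
      ← card_sqReps_filter_comp_perm (Equiv.swap 1 j.succ) (fun v ↦ Even (v 0 + v 1))]
    simp [swap_zero]
  have unique_class : ∀ v ∈ sqReps 4 (2 * N), #{j : Fin 3 | Even (v 0 + v j.succ)} = 1 := by
    intro v hv
    have parity := emod_four_of_mem_sqReps_four hv
    rw [Int.odd_iff] at hN
    simp only [card_filter, Fin.sum_univ_three, Int.even_iff, Fin.reduceSucc]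
    split_ifs <;> lia
  calc #(sqReps 4 (2 * N))
      = ∑ v ∈ sqReps 4 (2 * N), #{j : Fin 3 | Even (v 0 + v j.succ)} := by
        rw [sum_congr rfl unique_class, card_eq_sum_ones]
    _ = ∑ j : Fin 3, #{v ∈ sqReps 4 (2 * N) | Even (v 0 + v j.succ)} :=
        sum_card_bipartiteAbove_eq_sum_card_bipartiteBelow _
    _ = 3 * #(sqReps 4 N) := by simp [card_class]

lemma card_sqReps_four_of_odd {m : ℕ} (hm : Odd m) : #(sqReps 4 m) = 8 * σ 1 m := by
  have hmz : Odd (m : ℤ) := by exact_mod_cast hm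
  have card_odd := card_odd_sqReps_four (N := 4 * m) (by grind)
  rw [Int.mul_ediv_cancel_left _ four_ne_zero, Int.toNat_natCast] at card_odd
  have card_four_mul := card_sqReps_four_four_mul m
  have card_two_mul_two_mul := card_sqReps_four_two_mul_of_even (N := 2 * m) (even_two_mul _)
  rw [← mul_assoc, show (2 * 2 : ℤ) = 4 by norm_num,
    card_sqReps_four_two_mul_of_odd hmz] at card_two_mul_two_mul
  lia

lemma card_sqReps_four_two_pow_mul_of_odd (j : ℕ) {m : ℕ} (hm : Odd m) :
    #(sqReps 4 (2 ^ (j + 1) * m)) = 24 * σ 1 m := by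
  induction j with
  | zero =>
    rw [zero_add, pow_one, card_sqReps_four_two_mul_of_odd (by exact_mod_cast hm),
      card_sqReps_four_of_odd hm]
    ring
  | succ j ih =>
    have even_mul : Even (2 ^ (j + 1) * m : ℤ) := by simp [pow_succ', mul_assoc]
    rw [← ih, ← card_sqReps_four_two_mul_of_even even_mul]
    congr 2
    ring

lemma filter_not_four_dvd_divisors (j : ℕ) {m : ℕ} (hm : Odd m) :
    {d ∈ (2 ^ (j + 1) * m).divisors | ¬4 ∣ d} = (2 * m).divisors := by
  have hm0 : m ≠ 0 := hm.pos.ne'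
  ext d
  rw [mem_filter, Nat.mem_divisors, Nat.mem_divisors]
  constructor
  · rintro ⟨⟨hd, -⟩, h4⟩
    obtain ⟨_, e, hpow, he, rfl⟩ := (Nat.dvd_mul).1 hd
    obtain ⟨i, -, rfl⟩ := (Nat.dvd_prime_pow Nat.prime_two).1 hpow
    have hi : i ≤ 1 := by
      by_contra! hi
      exact h4 ((pow_dvd_pow 2 hi).mul_right e)
    exact ⟨mul_dvd_mul (pow_dvd_pow 2 hi) he, by positivity⟩
  · rintro ⟨hd, -⟩
    refine ⟨⟨hd.trans (mul_dvd_mul_right (dvd_pow_self 2 j.succ_ne_zero) m), by positivity⟩, ?_⟩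
    intro h4
    have := h4.trans hd
    grind

lemma sigma_one_two_mul_of_odd {m : ℕ} (hm : Odd m) : σ 1 (2 * m) = 3 * σ 1 m := by
  rw [ArithmeticFunction.isMultiplicative_sigma.map_mul_of_coprime
    (Nat.coprime_two_left.2 hm), show σ 1 2 = 3 by decide]

lemma r4_eq_card_sqReps (n : ℕ) : r4 n = #(sqReps 4 n) := by
  rw [r4, ← Nat.card_eq_finsetCard]
  exact Nat.card_congr (Equiv.subtypeEquivRight fun v ↦ mem_sqReps.symm)

lemma r4_eq_sum_divisors {n : ℕ} (hn : n ≠ 0) : r4 n = 8 * ∑ d ∈ n.divisors with ¬4 ∣ d, d := by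
  obtain ⟨k, m, hm, rfl⟩ := Nat.exists_eq_two_pow_mul_odd hn
  rw [r4_eq_card_sqReps]
  rcases k with _ | j
  · have not_four_dvd : ∀ d ∈ m.divisors, ¬4 ∣ d := fun d hd h4 ↦ by
      have := h4.trans (Nat.dvd_of_mem_divisors hd)
      grind
    rw [pow_zero, one_mul, filter_true_of_mem not_four_dvd, card_sqReps_four_of_odd hm,
      ArithmeticFunction.sigma_one_apply]
  · rw [filter_not_four_dvd_divisors j hm, ← ArithmeticFunction.sigma_one_apply,
      sigma_one_two_mul_of_odd hm]
    have h := card_sqReps_four_two_pow_mul_of_odd j hm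
    push_cast
    lia

lemma r4_zero : r4 0 = 1 := by
  rw [r4_eq_card_sqReps, card_eq_one]
  refine ⟨0, ?_⟩
  ext v
  simp [mem_sqReps, sum_eq_zero_iff_of_nonneg, sq_nonneg, funext_iff]

end FourSquares

/-- Jacobi's four-square theorem
`ϑ(q)⁴ = 1 + 8 Σ_{n≥1} (Σ_{d|n, 4∤d} d) q^n`, and consequently
`ϑ(q)⁴ + 4α(q) + 24G₂(q⁴)` has constant term `0` and `q¹`-coefficient `12`. -/
theorem theta_fourth_and_combination :
    (∀ n : ℕ, 1 ≤ n →
      (r4 n : ℤ) = 8 * ∑ d ∈ n.divisors.filter (fun d => ¬(4 ∣ d)), (d : ℤ)) ∧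
    comboCoeff 0 = 0 ∧ comboCoeff 1 = 12 := by
  have r4_one : r4 1 = 8 := by
    rw [FourSquares.r4_eq_sum_divisors one_ne_zero]
    decide
  refine ⟨fun n hn ↦ ?_, ?_, ?_⟩
  · rw [FourSquares.r4_eq_sum_divisors (Nat.one_le_iff_ne_zero.1 hn)]
    push_cast
    rfl
  · norm_num [comboCoeff, FourSquares.r4_zero]
  · norm_num [comboCoeff, r4_one]
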